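/- For every weakly-left-linear (WLL) deterministic conditional term rewriting system R over a signature F and all terms s, t ∈ T(F,V): if s →*_{U(R)} t, then s →*_R t. That is, the simultaneous unraveling U is sound for WLL DCTRSs. -/

import Mathlib

set_option autoImplicit false

/-- First-order terms over a signature `F` and variables `V`. -/
inductive Term (F : Type) (V : Type) : Type where
  | var : V → Term F V
  | app : F → List (Term F V) → Term F V

namespace Term

variable {F V G W : Type}

/-- Application of a substitution. -/
def subst (σ : V → Term F W) : Term F V → Term F W
  | .var x => σ x
  | .app f ts => .app f (ts.attach.map (fun ⟨t, _⟩ => subst σ t))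

/-- Renaming of variables. -/
def rename (g : V → W) (t : Term F V) : Term F W := t.subst (fun x => .var (g x))

/-- Mapping of function symbols. -/
def mapF (g : F → G) : Term F V → Term G V
  | .var x => .var x
  | .app f ts => .app (g f) (ts.attach.map (fun ⟨t, _⟩ => mapF g t))

/-- Number of occurrences of the variable `x` in a term. -/
def count [DecidableEq V] (x : V) : Term F V → ℕ
  | .var y => if y = x then 1 else 0
  | .app _ ts => (ts.attach.map (fun ⟨t, _⟩ => count x t)).sum

/-- The list of variables occurring in a term (with repetitions). -/
def varList : Term F V → List V
  | .var x => [x]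
  | .app _ ts => ts.attach.flatMap (fun ⟨t, _⟩ => varList t)

/-- A term is linear if every variable occurs at most once in it. -/
def Linear [DecidableEq V] (t : Term F V) : Prop := ∀ x : V, t.count x ≤ 1

/-- Well-formedness of a term with respect to an arity assignment. -/
inductive WF (ar : F → ℕ) : Term F V → Prop where
  | var (x : V) : WF ar (.var x)
  | app (f : F) (ts : List (Term F V)) :
      ts.length = ar f → (∀ t ∈ ts, WF ar t) → WF ar (.app f ts)

end Term

/-- Number of occurrences of `x` in a sequence of terms. -/
def seqCount {F V : Type} [DecidableEq V] (x : V) (ts : List (Term F V)) : ℕ :=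
  (ts.map (Term.count x)).sum

/-- An oriented conditional rewrite rule `l → r ⇐ s1 ≈ t1, …, sk ≈ tk`. -/
structure CRule (F V : Type) : Type where
  lhs : Term F V
  rhs : Term F V
  conds : List (Term F V × Term F V)

/-- A conditional term rewriting system: a set of conditional rules. -/
abbrev CTRS (F V : Type) := Set (CRule F V)

namespace CRule

variable {F V W : Type}

/-- The sequence `l, t1, …, tk` of "pattern" terms of a rule. -/
def pats (ρ : CRule F V) : List (Term F V) := ρ.lhs :: ρ.conds.map Prod.snd

/-- The sequence `r, s1, …, sk` of "source" terms of a rule. -/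
def srcs (ρ : CRule F V) : List (Term F V) := ρ.rhs :: ρ.conds.map Prod.fst

/-- Weak left-linearity: `|l,t1,…,tk|_x = 1` for every `x ∈ Var(r,s1,…,sk)`. -/
def WLL [DecidableEq V] (ρ : CRule F V) : Prop :=
  ∀ x : V, 0 < seqCount x ρ.srcs → seqCount x ρ.pats = 1

/-- Determinism: `Var(si) ⊆ Var(l, t1, …, t_{i−1})`. -/
def Det [DecidableEq V] (ρ : CRule F V) : Prop :=
  ∀ i : ℕ, ∀ h : i < ρ.conds.length, ∀ x : V,
    0 < Term.count x (ρ.conds.get ⟨i, h⟩).1 →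
    0 < seqCount x (ρ.lhs :: (ρ.conds.take i).map Prod.snd)

/-- Type 3: `Var(r) ⊆ Var(l, s1, t1, …, sk, tk)`. -/
def Type3 [DecidableEq V] (ρ : CRule F V) : Prop :=
  ∀ x : V, 0 < Term.count x ρ.rhs →
    0 < seqCount x (ρ.lhs :: ρ.conds.flatMap (fun c => [c.1, c.2]))

/-- The left-hand side is a non-variable term. -/
def LhsNonVar (ρ : CRule F V) : Prop := ∀ x : V, ρ.lhs ≠ .var x

/-- Renaming the variables of a rule. -/
def mapV (g : V → W) (ρ : CRule F V) : CRule F W :=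
  ⟨ρ.lhs.rename g, ρ.rhs.rename g, ρ.conds.map (fun c => (c.1.rename g, c.2.rename g))⟩

end CRule

/-- `R` is a deterministic CTRS (of Type 3, left-hand sides non-variable). -/
def IsDCTRS {F V : Type} [DecidableEq V] (R : CTRS F V) : Prop :=
  ∀ ρ ∈ R, ρ.Det ∧ ρ.Type3 ∧ ρ.LhsNonVar

/-- All rules of `R` are weakly left-linear. -/
def IsWLL {F V : Type} [DecidableEq V] (R : CTRS F V) : Prop := ∀ ρ ∈ R, ρ.WLL

/-- Closure of a relation under contexts (rewriting below the root). -/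
inductive CtxStep {F V : Type} (root : Term F V → Term F V → Prop) :
    Term F V → Term F V → Prop where
  | root {s t : Term F V} : root s t → CtxStep root s t
  | congr {f : F} {pre post : List (Term F V)} {s t : Term F V} :
      CtxStep root s t →
      CtxStep root (.app f (pre ++ s :: post)) (.app f (pre ++ t :: post))

/-- A root rewrite step using a rule of `R`, conditions evaluated with `prev`. -/
def RootStep {F V : Type} (R : CTRS F V) (prev : Term F V → Term F V → Prop)
    (s t : Term F V) : Prop :=
  ∃ ρ ∈ R, ∃ σ : V → Term F V,
    s = ρ.lhs.subst σ ∧ t = ρ.rhs.subst σ ∧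
    ∀ c ∈ ρ.conds, Relation.ReflTransGen prev (c.1.subst σ) (c.2.subst σ)

/-- The level-stratified reduction relation `→_{(n),R}`. -/
def LevelStep {F V : Type} (R : CTRS F V) : ℕ → Term F V → Term F V → Prop
  | 0 => fun _ _ => False
  | n + 1 => CtxStep (RootStep R (LevelStep R n))

/-- The reduction relation `→_R = ⋃_{n} →_{(n),R}`. -/
def Red {F V : Type} (R : CTRS F V) (s t : Term F V) : Prop :=
  ∃ n : ℕ, LevelStep R n s t

/-- Many-step reduction `→*_R`. -/
def RedStar {F V : Type} (R : CTRS F V) : Term F V → Term F V → Prop :=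
  Relation.ReflTransGen (Red R)

/-- `n`-fold composition of a relation. -/
def NFold {α : Type} (r : α → α → Prop) : ℕ → α → α → Prop
  | 0 => fun a b => a = b
  | n + 1 => fun a c => ∃ b, r a b ∧ NFold r n b c

/-- One-hole contexts. -/
inductive Ctx (F V : Type) : Type where
  | hole : Ctx F V
  | app : F → List (Term F V) → Ctx F V → List (Term F V) → Ctx F V

/-- Filling the hole of a context with a term. -/
def Ctx.fill {F V : Type} : Ctx F V → Term F V → Term F V
  | .hole, t => t
  | .app f pre C post, t => .app f (pre ++ C.fill t :: post)
/-- Signature extended with the fresh symbols `U^ρ_i`. -/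
abbrev UF (F V : Type) := F ⊕ (CRule F V × ℕ)

/-- Embedding of terms over `F` into terms over the extended signature `U_R(F)`. -/
def liftF {F V : Type} (t : Term F V) : Term (UF F V) V := t.mapF Sum.inl

/-- The list `X⃗_i` enumerating `Var(l, t1, …, t_{i−1})` in a fixed order. -/
def Xlist {F V : Type} [DecidableEq V] (ρ : CRule F V) (i : ℕ) : List V :=
  (ρ.lhs.varList ++ ((ρ.conds.take (i - 1)).map Prod.snd).flatMap Term.varList).dedup

/-- A dummy condition (used as a default, never relevant). -/
def dummyCond {F V : Type} (ρ : CRule F V) : Term F V × Term F V := (ρ.lhs, ρ.lhs)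

/-- The term `U^ρ_i(t, X⃗_i)`. -/
def uterm {F V : Type} [DecidableEq V] (ρ : CRule F V) (i : ℕ) (t : Term F V) :
    Term (UF F V) V :=
  .app (Sum.inr (ρ, i)) (liftF t :: (Xlist ρ i).map Term.var)

/-- Left-hand side of the `j`-th unraveled rule of `ρ` (j = 0, …, k). -/
def ulhs {F V : Type} [DecidableEq V] (ρ : CRule F V) (j : ℕ) : Term (UF F V) V :=
  if j = 0 then liftF ρ.lhs
  else uterm ρ j (ρ.conds.getD (j - 1) (dummyCond ρ)).2

/-- Right-hand side of the `j`-th unraveled rule of `ρ` (j = 0, …, k). -/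
def urhs {F V : Type} [DecidableEq V] (ρ : CRule F V) (j : ℕ) : Term (UF F V) V :=
  if j = ρ.conds.length then liftF ρ.rhs
  else uterm ρ (j + 1) (ρ.conds.getD j (dummyCond ρ)).1

/-- The unconditional rules `U(ρ)` obtained by unraveling the rule `ρ`. -/
def URules {F V : Type} [DecidableEq V] (ρ : CRule F V) : Set (CRule (UF F V) V) :=
  { r | ∃ j ≤ ρ.conds.length, r = ⟨ulhs ρ j, urhs ρ j, []⟩ }

/-- The simultaneous unraveling `U(R)` of a DCTRS `R`. -/
def USys {F V : Type} [DecidableEq V] (R : CTRS F V) : CTRS (UF F V) V :=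
  ⋃ ρ ∈ R, URules ρ

/-- `R` is ultra-WLL (`U`-WLL): every rule of `U(R)` is WLL. -/
def IsUWLL {F V : Type} [DecidableEq V] (R : CTRS F V) : Prop :=
  ∀ r ∈ USys R, r.WLL

/-!
A term `u` reached from `liftF s` stands for a term over `F` only up to postponed decisions: an
argument `U^ρ_i(v, X⃗_i)` may still evolve before the next condition of `ρ` is matched. The
relation `Ancestor R a u` therefore records how `u` arose from `a`: for a symbol `U^ρ_i` a
substitution `σ` remembers the values the variables had when they were bound, and each matched
pattern (`l`, `t₁`, …) is remembered with the `σ`-values of the variables that occur exactly once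
in the patterns and with the *current* values of the others. Repeated variables need no memory: by
weak left-linearity they do not occur in `r`, `s₁`, …, `sₖ`, so they only have to be given one
common value when the rule is finally applied, and the back-translation of the current value will
do. A repeated variable may change in several places of a remembered pattern at once, which is why
the invariance of `Ancestor R a` is proved for parallel steps rather than single ones.
-/

open Relation

theorem forall₂_comp {α β γ : Type*} {r : α → β → Prop} {s : β → γ → Prop} {t : α → γ → Prop}
    (h : ∀ a b c, r a b → s b c → t a c) {as : List α} {bs : List β} {cs : List γ}
    (hr : List.Forall₂ r as bs) (hs : List.Forall₂ s bs cs) : List.Forall₂ t as cs := by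
  induction hr generalizing cs with
  | nil => rwa [List.forall₂_nil_left_iff] at hs ⊢
  | cons hab _ ih =>
    obtain _ | ⟨hbc, hs⟩ := hs
    exact .cons (h _ _ _ hab hbc) (ih hs)

namespace Term

variable {F V W : Type}

@[elab_as_elim, induction_eliminator]
theorem induction {motive : Term F V → Prop} (var : ∀ x, motive (.var x))
    (app : ∀ f ts, (∀ t ∈ ts, motive t) → motive (.app f ts)) : ∀ t, motive t
  | .var x => var x
  | .app f ts => app f ts fun t _ => induction var app t

@[simp]
theorem subst_var (σ : V → Term F W) (x : V) : (var x).subst σ = σ x := by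
  rw [subst]

@[simp]
theorem subst_app (σ : V → Term F W) (f : F) (ts : List (Term F V)) :
    (app f ts).subst σ = app f (ts.map (subst σ)) := by
  simp [subst]

@[simp]
theorem mem_varList_var {x y : V} : x ∈ (var y : Term F V).varList ↔ x = y := by
  simp [varList]

@[simp]
theorem mem_varList_app {f : F} {ts : List (Term F V)} {x : V} :
    x ∈ (app f ts).varList ↔ ∃ t ∈ ts, x ∈ t.varList := by
  simp [varList]

theorem subst_congr {σ τ : V → Term F W} {t : Term F V} (h : ∀ x ∈ t.varList, σ x = τ x) :
    t.subst σ = t.subst τ := by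
  induction t with
  | var y => simpa using h y
  | app f ts ih =>
    rw [subst_app, subst_app,
      List.map_congr_left fun t ht => ih t ht fun x hx => h x (mem_varList_app.2 ⟨t, ht, hx⟩)]

@[simp]
theorem subst_id (t : Term F V) : t.subst var = t := by
  induction t with
  | var y => exact subst_var _ _
  | app f ts ih => rw [subst_app, List.map_congr_left ih, List.map_id']

theorem subst_rel {S : Term F W → Term F W → Prop} {σ τ : V → Term F W} {t : Term F V}
    (app : ∀ f ss ts, List.Forall₂ S ss ts → S (.app f ss) (.app f ts))
    (h : ∀ x ∈ t.varList, S (σ x) (τ x)) : S (t.subst σ) (t.subst τ) := by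
  induction t with
  | var y => simpa using h y
  | app f ts ih =>
    rw [subst_app, subst_app]
    refine app _ _ _ ?_
    rw [List.forall₂_map_left_iff, List.forall₂_map_right_iff, List.forall₂_same]
    exact fun t ht => ih t ht fun x hx => h x (mem_varList_app.2 ⟨t, ht, hx⟩)

theorem count_app [DecidableEq V] (x : V) (f : F) (ts : List (Term F V)) :
    (app f ts).count x = seqCount x ts := by
  simp [count, seqCount]

end Term

section Occurrences

variable {F V : Type} [DecidableEq V] {x : V}

theorem seqCount_cons (t : Term F V) (ts : List (Term F V)) :
    seqCount x (t :: ts) = t.count x + seqCount x ts := by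
  simp [seqCount]

theorem count_le_seqCount {t : Term F V} {ts : List (Term F V)} (ht : t ∈ ts) :
    t.count x ≤ seqCount x ts :=
  List.single_le_sum (fun _ _ => Nat.zero_le _) _ (List.mem_map_of_mem ht)

theorem seqCount_pos_iff {ts : List (Term F V)} : 0 < seqCount x ts ↔ ∃ t ∈ ts, 0 < t.count x := by
  simp [seqCount, Nat.pos_iff_ne_zero, List.sum_eq_zero_iff]

theorem Term.count_pos_iff {t : Term F V} : 0 < t.count x ↔ x ∈ t.varList := by
  induction t with
  | var y => grind [Term.count, Term.mem_varList_var]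
  | app f ts ih =>
    rw [count_app, seqCount_pos_iff, mem_varList_app]
    exact exists_congr fun t => and_congr_right (ih t)

theorem seqCount_pos_iff_mem_varList {ts : List (Term F V)} :
    0 < seqCount x ts ↔ ∃ t ∈ ts, x ∈ t.varList := by
  simp only [seqCount_pos_iff, Term.count_pos_iff]

theorem seqCount_cons_take_le {ts : List (Term F V)} {t : Term F V} {j : ℕ} (h : ts[j]? = some t) :
    seqCount x (t :: ts.take j) ≤ seqCount x ts := by
  obtain ⟨hj, rfl⟩ := List.getElem?_eq_some_iff.1 h
  have hperm : (ts[j] :: ts.take j).Perm (ts.take (j + 1)) := by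
    rw [List.take_succ_eq_append_getElem hj]
    exact (List.perm_append_singleton _ _).symm
  rw [seqCount, (hperm.map _).sum_eq]
  exact ((List.take_sublist _ _).map _).sum_le_sum fun _ _ => Nat.zero_le _

theorem notMem_varList_of_seqCount_cons_le_one {t u : Term F V} {ts : List (Term F V)}
    (h : seqCount x (t :: ts) ≤ 1) (ht : x ∈ t.varList) (hu : u ∈ ts) : x ∉ u.varList := by
  intro hx
  have hpos := Term.count_pos_iff.2 ht
  have hposs := seqCount_pos_iff_mem_varList.2 ⟨u, hu, hx⟩
  rw [seqCount_cons] at h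
  omega

end Occurrences

section Lift

variable {F V W : Type}

@[simp]
theorem liftF_var (x : V) : liftF (.var x : Term F V) = .var x := by
  rw [liftF, Term.mapF]

@[simp]
theorem liftF_app (f : F) (ts : List (Term F V)) :
    liftF (.app f ts) = .app (Sum.inl f) (ts.map liftF) := by
  simp [liftF, Term.mapF]

@[simp]
theorem mem_varList_liftF {t : Term F V} {x : V} : x ∈ (liftF t).varList ↔ x ∈ t.varList := by
  induction t with
  | var y => simp
  | app f ts ih => simpa using exists_congr fun t => and_congr_right (ih t)

theorem subst_liftF_congr {σ τ : V → Term (UF F V) W} {t : Term F V}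
    (h : ∀ x ∈ t.varList, σ x = τ x) : (liftF t).subst σ = (liftF t).subst τ :=
  Term.subst_congr fun x hx => h x (mem_varList_liftF.1 hx)

end Lift

section Rewriting

variable {F V : Type} {R : CTRS F V}

theorem CtxStep.mono {r r' : Term F V → Term F V → Prop} (h : r ≤ r') : CtxStep r ≤ CtxStep r' := by
  intro s t hst
  induction hst with
  | root hst => exact .root (h _ _ hst)
  | congr _ ih => exact .congr ih

theorem RootStep.mono {r r' : Term F V → Term F V → Prop} (h : r ≤ r') :
    RootStep R r ≤ RootStep R r' := by
  rintro s t ⟨ρ, hρ, σ, hs, ht, hconds⟩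
  exact ⟨ρ, hρ, σ, hs, ht, fun c hc => ReflTransGen.mono h _ _ (hconds c hc)⟩

theorem LevelStep.monotone (R : CTRS F V) : Monotone (LevelStep R) := by
  refine monotone_nat_of_le_succ fun n => ?_
  induction n with
  | zero => exact fun _ _ => False.elim
  | succ n ih => exact CtxStep.mono (RootStep.mono ih)

theorem RedStar.eventually_levelStep {s t : Term F V} (h : RedStar R s t) :
    ∀ᶠ n in Filter.atTop, ReflTransGen (LevelStep R n) s t := by
  induction h with
  | refl => exact .of_forall fun _ => .refl
  | tail _ hstep ih =>
    obtain ⟨m, hm⟩ := hstep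
    filter_upwards [ih, Filter.eventually_ge_atTop m] with n hn hmn
    exact hn.tail (LevelStep.monotone R hmn _ _ hm)

theorem RedStar.of_rule {ρ : CRule F V} (hρ : ρ ∈ R) (σ : V → Term F V)
    (hconds : ∀ c ∈ ρ.conds, RedStar R (c.1.subst σ) (c.2.subst σ)) :
    RedStar R (ρ.lhs.subst σ) (ρ.rhs.subst σ) := by
  obtain ⟨n, hn⟩ := ((Filter.eventually_all_finite ρ.conds.finite_toSet).2
    fun c hc => (hconds c hc).eventually_levelStep).exists
  exact .single ⟨n + 1, .root ⟨ρ, hρ, σ, rfl, rfl, hn⟩⟩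

theorem Red.congr {f : F} {pre post : List (Term F V)} {s t : Term F V} (h : Red R s t) :
    Red R (.app f (pre ++ s :: post)) (.app f (pre ++ t :: post)) := by
  obtain ⟨_ | n, hn⟩ := h
  · exact hn.elim
  · exact ⟨n + 1, .congr hn⟩

theorem RedStar.congr {f : F} {pre post : List (Term F V)} {s t : Term F V} (h : RedStar R s t) :
    RedStar R (.app f (pre ++ s :: post)) (.app f (pre ++ t :: post)) :=
  ReflTransGen.lift (p := Red R) (fun u => Term.app f (pre ++ u :: post))
    (fun _ _ => Red.congr) _ _ h

theorem RedStar.app_append {f : F} {ss ts : List (Term F V)} (h : List.Forall₂ (RedStar R) ss ts)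
    (pre : List (Term F V)) : RedStar R (.app f (pre ++ ss)) (.app f (pre ++ ts)) := by
  induction h generalizing pre with
  | nil => exact .refl
  | @cons s t _ _ hst _ ih =>
    have htail := ih (pre ++ [t])
    simp only [List.append_assoc, List.singleton_append] at htail
    exact ReflTransGen.trans hst.congr htail

theorem RedStar.app {f : F} {ss ts : List (Term F V)} (h : List.Forall₂ (RedStar R) ss ts) :
    RedStar R (.app f ss) (.app f ts) :=
  RedStar.app_append h []

theorem RedStar.subst {σ τ : V → Term F V} {t : Term F V}
    (h : ∀ x ∈ t.varList, RedStar R (σ x) (τ x)) : RedStar R (t.subst σ) (t.subst τ) :=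
  Term.subst_rel (fun _ _ _ => RedStar.app) h

end Rewriting

/-- The parallel closure `⇉` of a root relation `root`: simultaneous root steps at pairwise disjoint
positions. -/
inductive ParStep {F V : Type} (root : Term F V → Term F V → Prop) :
    Term F V → Term F V → Prop where
  | refl (s : Term F V) : ParStep root s s
  | root {s t : Term F V} : root s t → ParStep root s t
  | congr {f : F} {ss ts : List (Term F V)} :
      List.Forall₂ (ParStep root) ss ts → ParStep root (.app f ss) (.app f ts)

section ParStep

variable {F V W : Type} {root : Term F W → Term F W → Prop}

theorem CtxStep.parStep {s t : Term F W} (h : CtxStep root s t) : ParStep root s t := by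
  have hrefl (us : List (Term F W)) : List.Forall₂ (ParStep root) us us :=
    List.forall₂_same.2 fun u _ => .refl u
  induction h with
  | root h => exact .root h
  | congr _ ih => exact .congr (List.rel_append (hrefl _) (.cons ih (hrefl _)))

theorem ParStep.subst {σ τ : V → Term F W} {t : Term F V}
    (h : ∀ x ∈ t.varList, ParStep root (σ x) (τ x)) : ParStep root (t.subst σ) (t.subst τ) :=
  Term.subst_rel (fun _ _ _ => .congr) h

end ParStep

namespace CRule

variable {F V : Type}

/-- The matching problems met when `ρ` is applied to `a` with the substitution `σ`: the pattern `l`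
has to match a reduct of `a`, and each `tᵢ` a reduct of `sᵢσ`.  Treating `a ≈ l` as a zeroth
condition makes the unraveled rules `ulhs ρ j → urhs ρ j` uniform in `j`. -/
def goals (ρ : CRule F V) (σ : V → Term F V) (a : Term F V) : List (Term F V × Term F V) :=
  (a, ρ.lhs) :: ρ.conds.map fun c => (c.1.subst σ, c.2)

/-- The variables bound by the first `j` patterns of `ρ`, that is `Var(l, t₁, …, t_{j-1})`. -/
def boundVars (ρ : CRule F V) (j : ℕ) : Set V := {x | ∃ p ∈ ρ.pats.take j, x ∈ p.varList}

/-- The variables occurring exactly once in the patterns `l, t₁, …, tₖ` of `ρ`. -/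
def linVars [DecidableEq V] (ρ : CRule F V) : Set V := {x | seqCount x ρ.pats = 1}

variable {ρ : CRule F V}

theorem map_snd_goals (ρ : CRule F V) (σ : V → Term F V) (a : Term F V) :
    (ρ.goals σ a).map Prod.snd = ρ.pats := by
  simp [goals, pats]

theorem mem_boundVars_iff_goals {σ : V → Term F V} {a : Term F V} {j : ℕ} {x : V} :
    x ∈ ρ.boundVars j ↔ ∃ p ∈ (ρ.goals σ a).take j, x ∈ p.2.varList := by
  simp only [boundVars, ← map_snd_goals ρ σ a, ← List.map_take, List.mem_map,
    exists_exists_and_eq_and, Set.mem_ofPred_eq]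

theorem goals_getElem?_succ {j : ℕ} (hj : j < ρ.conds.length) (σ : V → Term F V) (a : Term F V) :
    (ρ.goals σ a)[j + 1]? = some (ρ.conds[j].1.subst σ, ρ.conds[j].2) := by
  simp [goals, hj]

theorem boundVars_mono (ρ : CRule F V) : Monotone ρ.boundVars :=
  fun _ _ hij _ ⟨p, hp, hx⟩ => ⟨p, List.take_subset_take_left _ hij hp, hx⟩

variable [DecidableEq V]

theorem mem_Xlist_succ {j : ℕ} {x : V} : x ∈ Xlist ρ (j + 1) ↔ x ∈ ρ.boundVars (j + 1) := by
  simp [Xlist, boundVars, pats, ← List.map_take]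

theorem nodup_Xlist (ρ : CRule F V) (i : ℕ) : (Xlist ρ i).Nodup := List.nodup_dedup _

theorem linVars_subset_boundVars (ρ : CRule F V) :
    ρ.linVars ⊆ ρ.boundVars (ρ.conds.length + 1) := by
  intro x (hx : seqCount x ρ.pats = 1)
  obtain ⟨p, hp, hxp⟩ := seqCount_pos_iff_mem_varList.1 (hx ▸ one_pos : 0 < seqCount x ρ.pats)
  exact ⟨p, by simpa [pats, List.take_of_length_le] using hp, hxp⟩

theorem WLL.mem_linVars_of_rhs (hW : ρ.WLL) {x : V} (hx : x ∈ ρ.rhs.varList) : x ∈ ρ.linVars :=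
  hW x (seqCount_pos_iff_mem_varList.2 ⟨_, List.mem_cons_self, hx⟩)

theorem WLL.mem_linVars_of_cond (hW : ρ.WLL) {c : Term F V × Term F V} (hc : c ∈ ρ.conds) {x : V}
    (hx : x ∈ c.1.varList) : x ∈ ρ.linVars :=
  hW x (seqCount_pos_iff_mem_varList.2 ⟨_, List.mem_cons_of_mem _ (List.mem_map_of_mem hc), hx⟩)

theorem Det.mem_boundVars (hD : ρ.Det) {i : ℕ} (hi : i < ρ.conds.length) {x : V}
    (hx : x ∈ ρ.conds[i].1.varList) : x ∈ ρ.boundVars (i + 1) := by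
  have hpos := hD i hi x (Term.count_pos_iff.2 hx)
  exact seqCount_pos_iff_mem_varList.1 (by simpa [pats, List.map_take] using hpos)

theorem goals_take_congr (hD : ρ.Det) (hW : ρ.WLL) {σ σ' : V → Term F V} {j : ℕ}
    (h : ∀ x ∈ ρ.linVars, x ∈ ρ.boundVars j → σ x = σ' x) (a : Term F V) :
    (ρ.goals σ a).take (j + 1) = (ρ.goals σ' a).take (j + 1) := by
  simp only [goals, List.take_succ_cons, ← List.map_take]
  congr 1
  refine List.map_congr_left fun c hc => Prod.ext (Term.subst_congr fun x hx => ?_) rfl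
  refine h x (hW.mem_linVars_of_cond (List.mem_of_mem_take hc) hx) ?_
  obtain ⟨i, hi, rfl⟩ := List.getElem_of_mem hc
  rw [List.length_take, lt_min_iff] at hi
  rw [List.getElem_take] at hx
  exact ρ.boundVars_mono hi.1 (hD.mem_boundVars hi.2 hx)

end CRule

section BackTranslation

variable {F V : Type} [DecidableEq V]

/-- The argument bound to `x` when `us` lists the values of the variables `X`; `x` itself if there
is none. -/
def lookupArg (X : List V) (us : List (Term F V)) (x : V) : Term F V :=
  us.getD (X.idxOf x) (.var x)

theorem lookupArg_map {X : List V} (τ : V → Term F V) {x : V} (hx : x ∈ X) :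
    lookupArg X (X.map τ) x = τ x := by
  simp [lookupArg, List.getD_eq_getElem?_getD, List.idxOf_lt_length_of_mem hx]

theorem map_lookupArg {X : List V} (hX : X.Nodup) {us : List (Term F V)}
    (hlen : us.length = X.length) : X.map (lookupArg X us) = us := by
  refine List.ext_getElem (by simp [hlen]) fun i hi hi' => ?_
  simp [lookupArg, hX.idxOf_getElem, hi']

/-- The back-translation of terms over the extended signature: `U^ρ_i(u, X⃗_i τ)` becomes `lτ`,
where `l` is the left-hand side of `ρ`, so that the matching done so far is undone. -/
def backTranslate : Term (UF F V) V → Term F V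
  | .var x => .var x
  | .app (Sum.inl f) us => .app f (us.attach.map fun ⟨u, _⟩ => backTranslate u)
  | .app (Sum.inr (ρ, i)) us =>
      ρ.lhs.subst
        (lookupArg (Xlist ρ i) (us.attach.map fun ⟨u, _⟩ => backTranslate u).tail)

@[simp]
theorem backTranslate_var (x : V) : backTranslate (.var x : Term (UF F V) V) = .var x := by
  rw [backTranslate]

@[simp]
theorem backTranslate_app_inl (f : F) (us : List (Term (UF F V) V)) :
    backTranslate (.app (Sum.inl f) us) = .app f (us.map backTranslate) := by
  simp [backTranslate]

theorem backTranslate_app_inr (ρ : CRule F V) (j : ℕ) (u : Term (UF F V) V)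
    (τ : V → Term (UF F V) V) :
    backTranslate (.app (Sum.inr (ρ, j + 1)) (u :: (Xlist ρ (j + 1)).map τ)) =
      ρ.lhs.subst fun x => backTranslate (τ x) := by
  rw [backTranslate]
  refine Term.subst_congr fun x hx => ?_
  have hX : x ∈ Xlist ρ (j + 1) := CRule.mem_Xlist_succ.2 ⟨_, by simp [CRule.pats], hx⟩
  simpa [Function.comp_def] using lookupArg_map (fun x => backTranslate (τ x)) hX

theorem backTranslate_liftF_subst (t : Term F V) (τ : V → Term (UF F V) V) :
    backTranslate ((liftF t).subst τ) = t.subst fun x => backTranslate (τ x) := by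
  induction t with
  | var y => simp
  | app f ts ih => simpa using ih

@[simp]
theorem backTranslate_liftF (t : Term F V) : backTranslate (liftF t) = t := by
  simpa using backTranslate_liftF_subst t .var

end BackTranslation

theorem exists_eq_map_of_forall₂_map {F V : Type} {S : Term F V → Term F V → Prop} {X : List V}
    (hX : X.Nodup) {τ : V → Term F V} {us : List (Term F V)} (h : List.Forall₂ S (X.map τ) us) :
    ∃ τ', us = X.map τ' ∧ ∀ x ∈ X, S (τ x) (τ' x) := by
  classical
  have hus := map_lookupArg hX (us := us) (by simpa using h.length_eq.symm)
  refine ⟨lookupArg X us, hus.symm, ?_⟩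
  rwa [← hus, List.forall₂_map_left_iff, List.forall₂_map_right_iff, List.forall₂_same] at h

section HistorySubstitution

variable {F V : Type}

open Classical in
/-- The substitution under which a matched pattern is remembered: on the linear variables `L` the
values `σ` they had when they were bound, elsewhere the current values `τ`. -/
noncomputable def histSubst (L : Set V) (σ : V → Term F V) (τ : V → Term (UF F V) V) :
    V → Term (UF F V) V :=
  L.piecewise (fun x => liftF (σ x)) τ

variable {L : Set V} {σ : V → Term F V} {τ : V → Term (UF F V) V} {x : V}

theorem histSubst_of_mem (hx : x ∈ L) : histSubst L σ τ x = liftF (σ x) :=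
  if_pos hx

theorem histSubst_of_notMem (hx : x ∉ L) : histSubst L σ τ x = τ x :=
  if_neg hx

theorem histSubst_congr {σ' : V → Term F V} {τ' : V → Term (UF F V) V}
    (hσ : x ∈ L → σ x = σ' x) (hτ : τ x = τ' x) : histSubst L σ τ x = histSubst L σ' τ' x := by
  by_cases hx : x ∈ L
  · rw [histSubst_of_mem hx, histSubst_of_mem hx, hσ hx]
  · rw [histSubst_of_notMem hx, histSubst_of_notMem hx, hτ]

theorem ParStep.histSubst_apply {root : Term (UF F V) V → Term (UF F V) V → Prop}
    {τ' : V → Term (UF F V) V} (h : ParStep root (τ x) (τ' x)) :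
    ParStep root (histSubst L σ τ x) (histSubst L σ τ' x) := by
  by_cases hx : x ∈ L
  · rw [histSubst_of_mem hx, histSubst_of_mem hx]
    exact .refl _
  · rwa [histSubst_of_notMem hx, histSubst_of_notMem hx]

theorem backTranslate_histSubst_of_mem [DecidableEq V] (hx : x ∈ L) :
    backTranslate (histSubst L σ τ x) = σ x := by
  rw [histSubst_of_mem hx, backTranslate_liftF]

end HistorySubstitution

/-- `Ancestor R a u`: the term `a` over `F` is a possible origin of the term `u` over the extended
signature.  In the case of `u = U^ρ_{j+1}(v, X⃗τ)`, the first `j + 1` goals of `ρ` have been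
matched: their patterns, with history `σ`, and the linear variables they bind have recorded
ancestors, and `v` descends from the left side of the next goal. -/
inductive Ancestor {F V : Type} [DecidableEq V] (R : CTRS F V) :
    Term F V → Term (UF F V) V → Prop where
  | var {a : Term F V} {x : V} : RedStar R a (.var x) → Ancestor R a (.var x)
  | app {a : Term F V} {f : F} {ss : List (Term F V)} {us : List (Term (UF F V) V)} :
      RedStar R a (.app f ss) → ss.length = us.length →
      (∀ p ∈ ss.zip us, Ancestor R p.1 p.2) → Ancestor R a (.app (Sum.inl f) us)
  | cond {a : Term F V} {ρ : CRule F V} {j : ℕ} {σ : V → Term F V} {τ : V → Term (UF F V) V}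
      {next : Term F V × Term F V} {v : Term (UF F V) V} :
      ρ ∈ R →
      (∀ p ∈ (ρ.goals σ a).take (j + 1),
        Ancestor R p.1 ((liftF p.2).subst (histSubst ρ.linVars σ τ))) →
      (∀ p ∈ (ρ.goals σ a).take (j + 1), ∀ x ∈ p.2.varList, x ∈ ρ.linVars →
        Ancestor R (σ x) (τ x)) →
      (ρ.goals σ a)[j + 1]? = some next → Ancestor R next.1 v →
      Ancestor R a (.app (Sum.inr (ρ, j + 1)) (v :: (Xlist ρ (j + 1)).map τ))

section Ancestor

variable {F V : Type} [DecidableEq V] {R : CTRS F V} {a b : Term F V}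

theorem Ancestor.of_forall₂ {f : F} {ss : List (Term F V)} {us : List (Term (UF F V) V)}
    (ha : RedStar R a (.app f ss)) (h : List.Forall₂ (Ancestor R) ss us) :
    Ancestor R a (.app (Sum.inl f) us) :=
  .app ha h.length_eq fun _ hp => (List.forall₂_iff_zip.1 h).2 hp

theorem Ancestor.trans_left {u : Term (UF F V) V} (hab : RedStar R a b) (h : Ancestor R b u) :
    Ancestor R a u := by
  induction h with
  | var hb => exact .var (ReflTransGen.trans hab hb)
  | app hb hlen hargs => exact .app (ReflTransGen.trans hab hb) hlen hargs
  | cond hρ hpats hvars hnext hv ihpats =>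
    simp only [CRule.goals, List.take_succ_cons, List.forall_mem_cons, List.getElem?_cons_succ]
      at hpats hvars hnext ihpats
    refine .cond hρ ?_ ?_ hnext hv
    all_goals simp only [CRule.goals, List.take_succ_cons, List.forall_mem_cons]
    · exact ⟨ihpats.1 hab, hpats.2⟩
    · exact hvars

theorem Ancestor.subst {σ : V → Term F V} {τ : V → Term (UF F V) V} {t : Term F V}
    (h : ∀ x ∈ t.varList, Ancestor R (σ x) (τ x)) :
    Ancestor R (t.subst σ) ((liftF t).subst τ) := by
  induction t with
  | var y => simpa using h y
  | app f ts ih =>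
    rw [Term.subst_app, liftF_app, Term.subst_app, List.map_map]
    refine .of_forall₂ .refl ?_
    rw [List.forall₂_map_left_iff, List.forall₂_map_right_iff, List.forall₂_same]
    exact fun t ht => ih t ht fun x hx => h x (Term.mem_varList_app.2 ⟨t, ht, hx⟩)

theorem Ancestor.liftF_self (t : Term F V) : Ancestor R t (liftF t) := by
  simpa using Ancestor.subst (R := R) (t := t) (σ := .var) (τ := .var) fun x _ => .var .refl

theorem Ancestor.redStar_backTranslate {u : Term (UF F V) V} (h : Ancestor R a u) :
    RedStar R a (backTranslate u) := by
  induction h with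
  | var ha => simpa using ha
  | @app a f ss us ha hlen _ ih =>
    rw [backTranslate_app_inl]
    refine ReflTransGen.trans ha (RedStar.app ?_)
    rw [List.forall₂_map_right_iff]
    exact List.forall₂_iff_zip.2 ⟨hlen, fun hp => ih _ hp⟩
  | @cond a ρ j σ τ _ _ _ _ _ _ _ ihpats ihvars =>
    have hmem : (a, ρ.lhs) ∈ (ρ.goals σ a).take (j + 1) := by simp [CRule.goals]
    have hlhs := ihpats _ hmem
    rw [backTranslate_liftF_subst] at hlhs
    rw [backTranslate_app_inr]
    refine ReflTransGen.trans hlhs (RedStar.subst fun x hx => ?_)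
    by_cases hL : x ∈ ρ.linVars
    · rw [backTranslate_histSubst_of_mem hL]
      exact ihvars _ hmem x hx hL
    · rw [histSubst_of_notMem hL]
      exact .refl

end Ancestor

/-- `σ` is a history of the match of the pattern `t` against `a` whose current result is `tτ`; only
the values of `σ` on the linear variables `L` matter. -/
structure IsHistory {F V : Type} [DecidableEq V] (R : CTRS F V) (L : Set V) (σ : V → Term F V)
    (τ : V → Term (UF F V) V) (a t : Term F V) : Prop where
  pattern : Ancestor R a ((liftF t).subst (histSubst L σ τ))
  vars : ∀ x ∈ t.varList, x ∈ L → Ancestor R (σ x) (τ x)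

section IsHistory

variable {F V : Type} [DecidableEq V] {R : CTRS F V} {L : Set V} {σ : V → Term F V}
  {τ : V → Term (UF F V) V} {a t : Term F V}

theorem IsHistory.congr {σ' : V → Term F V} {τ' : V → Term (UF F V) V}
    (h : IsHistory R L σ τ a t) (hσ : ∀ x ∈ t.varList, x ∈ L → σ x = σ' x)
    (hτ : ∀ x ∈ t.varList, τ x = τ' x) : IsHistory R L σ' τ' a t where
  pattern := by
    rw [← subst_liftF_congr fun x hx => histSubst_congr (hσ x hx) (hτ x hx)]
    exact h.pattern
  vars x hx hL := by
    rw [← hσ x hx hL, ← hτ x hx]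
    exact h.vars x hx hL

theorem exists_agree_of_seqCount_cons_le_one {ts : List (Term F V)}
    (hcount : ∀ x ∈ L, seqCount x (t :: ts) ≤ 1) (σ₁ σ₂ : V → Term F V) :
    ∃ σ : V → Term F V, (∀ x ∈ t.varList, σ x = σ₁ x) ∧
      ∀ u ∈ ts, ∀ x ∈ u.varList, x ∈ L → σ x = σ₂ x := by
  refine ⟨fun x => if x ∈ t.varList then σ₁ x else σ₂ x, fun x hx => if_pos hx, ?_⟩
  intro u hu x hx hL
  exact if_neg fun hxt => notMem_varList_of_seqCount_cons_le_one (hcount x hL) hxt hu hx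

theorem exists_isHistory_cons {ps : List (Term F V × Term F V)} {p : Term F V × Term F V}
    (hcount : ∀ x ∈ L, seqCount x (p.2 :: ps.map Prod.snd) ≤ 1)
    (hp : ∃ σ₁, IsHistory R L σ₁ τ p.1 p.2) (hps : ∀ q ∈ ps, IsHistory R L σ τ q.1 q.2) :
    ∃ σ', (∀ q ∈ ps, ∀ x ∈ q.2.varList, x ∈ L → σ' x = σ x) ∧
      ∀ q ∈ p :: ps, IsHistory R L σ' τ q.1 q.2 := by
  obtain ⟨σ₁, hp⟩ := hp
  obtain ⟨σ', hσ₁, hσ⟩ := exists_agree_of_seqCount_cons_le_one hcount σ₁ σ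
  rw [List.forall_mem_map] at hσ
  refine ⟨σ', hσ, List.forall_mem_cons.2 ⟨?_, fun q hq => ?_⟩⟩
  · exact hp.congr (fun x hx _ => (hσ₁ x hx).symm) fun _ _ => rfl
  · exact (hps q hq).congr (fun x hx hL => (hσ q hq x hx hL).symm) fun _ _ => rfl

theorem exists_isHistory_forall {ps : List (Term F V × Term F V)}
    (hcount : ∀ x ∈ L, seqCount x (ps.map Prod.snd) ≤ 1)
    (hps : ∀ p ∈ ps, ∃ σ, IsHistory R L σ τ p.1 p.2) :
    ∃ σ, ∀ p ∈ ps, IsHistory R L σ τ p.1 p.2 := by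
  induction ps with
  | nil => exact ⟨.var, by simp⟩
  | cons p ps ih =>
    rw [List.forall_mem_cons] at hps
    obtain ⟨σ, hσ⟩ := ih (fun x hx => by grind [seqCount_cons]) hps.2
    obtain ⟨σ', -, hσ'⟩ := exists_isHistory_cons hcount hps.1 hσ
    exact ⟨σ', hσ'⟩

theorem Ancestor.exists_isHistory (hcount : ∀ x ∈ L, t.count x ≤ 1)
    (h : Ancestor R a ((liftF t).subst τ)) : ∃ σ, IsHistory R L σ τ a t := by
  induction t generalizing a with
  | var y =>
    rw [liftF_var, Term.subst_var] at h
    refine ⟨fun _ => a, ?_, ?_⟩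
    · rw [liftF_var, Term.subst_var]
      by_cases hL : y ∈ L
      · rw [histSubst_of_mem hL]
        exact .liftF_self a
      · rwa [histSubst_of_notMem hL]
    · intro x hx _
      rwa [Term.mem_varList_var.1 hx]
  | app f ts ih =>
    rw [liftF_app, Term.subst_app, List.map_map] at h
    obtain _ | @⟨_, _, ss, _, ha, hlen, hargs⟩ := h
    rw [List.length_map] at hlen
    have hancestors := List.forall₂_map_right_iff.1 (List.forall₂_iff_zip.2 ⟨by simpa, hargs _⟩)
    have hhist (p) (hp : p ∈ ss.zip ts) : ∃ σ, IsHistory R L σ τ p.1 p.2 := by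
      have hpts := (List.of_mem_zip hp).2
      refine ih _ hpts (fun x hx => ?_) ((List.forall₂_iff_zip.1 hancestors).2 hp)
      exact (count_le_seqCount hpts).trans (Term.count_app x f ts ▸ hcount x hx)
    obtain ⟨σ, hσ⟩ := exists_isHistory_forall (ps := ss.zip ts)
      (by simpa only [List.map_snd_zip hlen.ge, ← Term.count_app _ f] using hcount) hhist
    refine ⟨σ, ?_, fun x hx hL => ?_⟩
    · rw [liftF_app, Term.subst_app, List.map_map]
      refine .of_forall₂ ha ?_
      rw [List.forall₂_map_right_iff]
      exact List.forall₂_iff_zip.2 ⟨hlen, fun hp => (hσ _ hp).pattern⟩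
    · obtain ⟨t, ht, hxt⟩ := Term.mem_varList_app.1 hx
      rw [← List.map_snd_zip hlen.ge, List.mem_map] at ht
      obtain ⟨p, hp, rfl⟩ := ht
      exact (hσ p hp).vars x hxt hL

end IsHistory

/-- The first `j` goals of `ρ`, applied to `a`, have been matched with history `σ` and current
values `τ`. -/
def MatchedUpTo {F V : Type} [DecidableEq V] (R : CTRS F V) (ρ : CRule F V) (j : ℕ)
    (σ : V → Term F V) (τ : V → Term (UF F V) V) (a : Term F V) : Prop :=
  ∀ p ∈ (ρ.goals σ a).take j, IsHistory R ρ.linVars σ τ p.1 p.2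

section MatchedUpTo

variable {F V : Type} [DecidableEq V] {R : CTRS F V} {ρ : CRule F V} {j : ℕ} {σ : V → Term F V}
  {τ : V → Term (UF F V) V} {a : Term F V}

theorem MatchedUpTo.congr {τ' : V → Term (UF F V) V} (h : MatchedUpTo R ρ j σ τ a)
    (hτ : ∀ x ∈ ρ.boundVars j, τ x = τ' x) : MatchedUpTo R ρ j σ τ' a := fun p hp =>
  (h p hp).congr (fun _ _ _ => rfl)
    fun x hx => hτ x (CRule.mem_boundVars_iff_goals.2 ⟨p, hp, hx⟩)

theorem MatchedUpTo.ancestor_subst (h : MatchedUpTo R ρ j σ τ a) {t : Term F V}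
    (hlin : ∀ x ∈ t.varList, x ∈ ρ.linVars) (hbound : ∀ x ∈ t.varList, x ∈ ρ.boundVars j) :
    Ancestor R (t.subst σ) ((liftF t).subst τ) := by
  refine .subst fun x hx => ?_
  obtain ⟨p, hp, hxp⟩ := CRule.mem_boundVars_iff_goals.1 (hbound x hx)
  exact (h p hp).vars x hxp (hlin x hx)

theorem MatchedUpTo.exists_succ (hD : ρ.Det) (hW : ρ.WLL) (h : MatchedUpTo R ρ j σ τ a)
    {p : Term F V × Term F V} (hp : (ρ.goals σ a)[j]? = some p)
    (hpτ : Ancestor R p.1 ((liftF p.2).subst τ)) : ∃ σ', MatchedUpTo R ρ (j + 1) σ' τ a := by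
  have hcount (x) (hx : x ∈ ρ.linVars) :
      seqCount x (p.2 :: ((ρ.goals σ a).take j).map Prod.snd) ≤ 1 := by
    rw [List.map_take, CRule.map_snd_goals, ← show seqCount x ρ.pats = 1 from hx]
    refine seqCount_cons_take_le ?_
    rw [← CRule.map_snd_goals ρ σ a, List.getElem?_map, hp, Option.map_some]
  have hpσ : ∃ σ₁, IsHistory R ρ.linVars σ₁ τ p.1 p.2 :=
    hpτ.exists_isHistory fun x hx => (count_le_seqCount List.mem_cons_self).trans (hcount x hx)
  obtain ⟨σ', hσ, hσ'⟩ := exists_isHistory_cons hcount hpσ h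
  refine ⟨σ', ?_⟩
  have hgoals : (ρ.goals σ' a).take (j + 1) = (ρ.goals σ a).take (j + 1) := by
    refine CRule.goals_take_congr hD hW (fun x hL hx => ?_) a
    obtain ⟨q, hq, hxq⟩ := CRule.mem_boundVars_iff_goals.1 hx
    exact hσ q hq x hxq hL
  intro q hq
  rw [hgoals, List.take_add_one, hp, Option.toList_some, List.mem_append, List.mem_singleton,
    or_comm, ← List.mem_cons] at hq
  exact hσ' q hq

theorem MatchedUpTo.redStar_rhs (hW : ρ.WLL) (hρ : ρ ∈ R)
    (h : MatchedUpTo R ρ (ρ.conds.length + 1) σ τ a) : RedStar R a (ρ.rhs.subst σ) := by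
  let θ (x : V) : Term F V := backTranslate (histSubst ρ.linVars σ τ x)
  have hθ (t : Term F V) (ht : ∀ x ∈ t.varList, x ∈ ρ.linVars) : t.subst θ = t.subst σ :=
    Term.subst_congr fun x hx => backTranslate_histSubst_of_mem (ht x hx)
  have hgoal (p) (hp : p ∈ ρ.goals σ a) : RedStar R p.1 (p.2.subst θ) := by
    rw [← backTranslate_liftF_subst]
    refine (h p ?_).pattern.redStar_backTranslate
    rwa [List.take_of_length_le (by simp [CRule.goals])]
  have hconds (c) (hc : c ∈ ρ.conds) : RedStar R (c.1.subst θ) (c.2.subst θ) := by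
    rw [hθ _ fun x => hW.mem_linVars_of_cond hc]
    exact hgoal (c.1.subst σ, c.2) (List.mem_cons_of_mem _ (List.mem_map_of_mem hc))
  rw [← hθ _ fun x => hW.mem_linVars_of_rhs]
  exact ReflTransGen.trans (hgoal _ List.mem_cons_self) (RedStar.of_rule hρ θ hconds)

theorem Ancestor.of_matchedUpTo (hρ : ρ ∈ R) (h : MatchedUpTo R ρ (j + 1) σ τ a)
    {p : Term F V × Term F V} (hp : (ρ.goals σ a)[j + 1]? = some p) {v : Term (UF F V) V}
    (hv : Ancestor R p.1 v) :
    Ancestor R a (.app (Sum.inr (ρ, j + 1)) (v :: (Xlist ρ (j + 1)).map τ)) :=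
  .cond hρ (fun q hq => (h q hq).pattern) (fun q hq => (h q hq).vars) hp hv

theorem Ancestor.exists_matchedUpTo {v : Term (UF F V) V}
    (h : Ancestor R a (.app (Sum.inr (ρ, j + 1)) (v :: (Xlist ρ (j + 1)).map τ))) :
    ∃ σ p, MatchedUpTo R ρ (j + 1) σ τ a ∧ (ρ.goals σ a)[j + 1]? = some p ∧
      Ancestor R p.1 v := by
  generalize hu : Term.app _ _ = u at h
  obtain _ | _ | @⟨_, _, _, σ, τ', p, _, _, hpats, hvars, hp, hv⟩ := h
  · cases hu
  · cases hu
  simp only [Term.app.injEq, Sum.inr.injEq, Prod.mk.injEq, Nat.add_right_cancel_iff,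
    List.cons.injEq] at hu
  obtain ⟨⟨rfl, rfl⟩, rfl, hτ⟩ := hu
  rw [List.map_inj_left] at hτ
  have hmatched : MatchedUpTo R ρ (j + 1) σ τ' a := fun q hq => ⟨hpats q hq, hvars q hq⟩
  exact ⟨σ, p, hmatched.congr fun x hx => (hτ x (CRule.mem_Xlist_succ.2 hx)).symm, hp, hv⟩

end MatchedUpTo

section RootSteps

variable {F V : Type} [DecidableEq V] {R : CTRS F V} {ρ : CRule F V} {j : ℕ} {σ : V → Term F V}
  {τ : V → Term (UF F V) V} {a : Term F V}

theorem uterm_subst (ρ : CRule F V) (i : ℕ) (t : Term F V) (τ : V → Term (UF F V) V) :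
    (uterm ρ i t).subst τ = .app (Sum.inr (ρ, i)) ((liftF t).subst τ :: (Xlist ρ i).map τ) := by
  simp [uterm, Function.comp_def]

theorem Ancestor.exists_matchedUpTo_of_ulhs (hj : j ≤ ρ.conds.length)
    (h : Ancestor R a ((ulhs ρ j).subst τ)) :
    ∃ σ p, MatchedUpTo R ρ j σ τ a ∧ (ρ.goals σ a)[j]? = some p ∧
      Ancestor R p.1 ((liftF p.2).subst τ) := by
  cases j with
  | zero => exact ⟨.var, (a, ρ.lhs), by simp [MatchedUpTo], rfl, h⟩
  | succ j =>
    rw [ulhs, if_neg j.succ_ne_zero, Nat.add_sub_cancel, List.getD_eq_getElem _ _ hj,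
      uterm_subst] at h
    obtain ⟨σ, p, hmatched, hp, hv⟩ := h.exists_matchedUpTo
    refine ⟨σ, p, hmatched, hp, ?_⟩
    rw [CRule.goals_getElem?_succ hj, Option.some_inj] at hp
    rwa [← hp] at hv ⊢

theorem MatchedUpTo.ancestor_urhs (hD : ρ.Det) (hW : ρ.WLL) (hρ : ρ ∈ R)
    (hj : j ≤ ρ.conds.length) (h : MatchedUpTo R ρ (j + 1) σ τ a) :
    Ancestor R a ((urhs ρ j).subst τ) := by
  obtain rfl | hlt := hj.eq_or_lt
  · rw [urhs, if_pos rfl]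
    refine .trans_left (h.redStar_rhs hW hρ) (h.ancestor_subst ?_ ?_)
    · exact fun x => hW.mem_linVars_of_rhs
    · exact fun x hx => ρ.linVars_subset_boundVars (hW.mem_linVars_of_rhs hx)
  · rw [urhs, if_neg hlt.ne, List.getD_eq_getElem _ _ hlt, uterm_subst]
    refine .of_matchedUpTo hρ h (CRule.goals_getElem?_succ hlt σ a) (h.ancestor_subst ?_ ?_)
    · exact fun x => hW.mem_linVars_of_cond (List.getElem_mem hlt)
    · exact fun x => hD.mem_boundVars hlt

theorem Ancestor.urhs_of_ulhs (hD : ρ.Det) (hW : ρ.WLL) (hρ : ρ ∈ R) (hj : j ≤ ρ.conds.length)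
    (h : Ancestor R a ((ulhs ρ j).subst τ)) : Ancestor R a ((urhs ρ j).subst τ) := by
  obtain ⟨σ, p, hmatched, hp, hpτ⟩ := h.exists_matchedUpTo_of_ulhs hj
  obtain ⟨σ', hmatched'⟩ := hmatched.exists_succ hD hW hp hpτ
  exact hmatched'.ancestor_urhs hD hW hρ hj

end RootSteps

/-- A root step `u → u'` by one of the unraveled rules of `R`. -/
def UnravelStep {F V : Type} [DecidableEq V] (R : CTRS F V) (u u' : Term (UF F V) V) : Prop :=
  ∃ ρ ∈ R, ∃ j ≤ ρ.conds.length, ∃ τ, u = (ulhs ρ j).subst τ ∧ u' = (urhs ρ j).subst τ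

section Preservation

variable {F V : Type} [DecidableEq V] {R : CTRS F V} {a : Term F V} {u u' : Term (UF F V) V}

theorem Red.parStep_unravelStep (h : Red (USys R) u u') : ParStep (UnravelStep R) u u' := by
  obtain ⟨_ | n, h⟩ := h
  · exact h.elim
  refine (CtxStep.mono ?_ _ _ h).parStep
  rintro _ _ ⟨r, hr, τ, rfl, rfl, -⟩
  simp only [USys, URules, Set.mem_iUnion] at hr
  obtain ⟨ρ, hρ, j, hj, rfl⟩ := hr
  exact ⟨ρ, hρ, j, hj, τ, rfl, rfl⟩

theorem Ancestor.unravelStep (hD : ∀ ρ ∈ R, ρ.Det) (hW : IsWLL R) (h : Ancestor R a u)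
    (hu : UnravelStep R u u') : Ancestor R a u' := by
  obtain ⟨ρ, hρ, j, hj, τ, rfl, rfl⟩ := hu
  exact h.urhs_of_ulhs (hD ρ hρ) (hW ρ hρ) hρ hj

theorem Ancestor.parStep (hD : ∀ ρ ∈ R, ρ.Det) (hW : IsWLL R) (h : Ancestor R a u)
    (hu : ParStep (UnravelStep R) u u') : Ancestor R a u' := by
  induction h generalizing u' with
  | @var a x ha =>
    cases hu with
    | refl => exact .var ha
    | root hroot => exact Ancestor.unravelStep hD hW (.var ha) hroot
  | @app a f ss us ha hlen hargs ih =>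
    cases hu with
    | refl => exact .app ha hlen hargs
    | root hroot => exact Ancestor.unravelStep hD hW (.app ha hlen hargs) hroot
    | @congr _ _ us' hus =>
      have hancestors : List.Forall₂ (fun s u => ∀ u', ParStep (UnravelStep R) u u' →
          Ancestor R s u') ss us := List.forall₂_iff_zip.2 ⟨hlen, fun hp _ => ih _ hp⟩
      exact .of_forall₂ ha (forall₂_comp (fun _ _ _ hu hstep => hu _ hstep) hancestors hus)
  | @cond a ρ j σ τ next v hρ hpats hvars hnext hv ihpats ihvars ihv =>
    cases hu with
    | refl => exact .cond hρ hpats hvars hnext hv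
    | root hroot => exact Ancestor.unravelStep hD hW (.cond hρ hpats hvars hnext hv) hroot
    | @congr _ _ us' hus =>
      obtain _ | ⟨hvv', hvs⟩ := hus
      obtain ⟨τ', rfl, hτ⟩ := exists_eq_map_of_forall₂_map (CRule.nodup_Xlist ρ _) hvs
      have hstep (p) (hp : p ∈ (ρ.goals σ a).take (j + 1)) (x) (hx : x ∈ p.2.varList) :
          ParStep (UnravelStep R) (τ x) (τ' x) :=
        hτ x (CRule.mem_Xlist_succ.2 (CRule.mem_boundVars_iff_goals.2 ⟨p, hp, hx⟩))
      refine .cond hρ (fun p hp => ?_) (fun p hp x hx hL => ?_) hnext (ihv hvv')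
      · refine ihpats p hp (.subst fun x hx => ParStep.histSubst_apply ?_)
        exact hstep p hp x (mem_varList_liftF.1 hx)
      · exact ihvars p hp x hx hL (hstep p hp x hx)

theorem Ancestor.redStar (hD : ∀ ρ ∈ R, ρ.Det) (hW : IsWLL R) (h : Ancestor R a u)
    (hu : RedStar (USys R) u u') : Ancestor R a u' := by
  induction hu with
  | refl => exact h
  | tail _ hstep ih => exact ih.parStep hD hW hstep.parStep_unravelStep

end Preservation

theorem unraveling_sound_for_WLL_DCTRSs_general {F V : Type} [DecidableEq V] (R : CTRS F V)
    (hD : ∀ ρ ∈ R, ρ.Det) (hW : IsWLL R) (s : Term F V) (u : Term (UF F V) V)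
    (h : RedStar (USys R) (liftF s) u) : RedStar R s (backTranslate u) :=
  ((Ancestor.liftF_self s).redStar hD hW h).redStar_backTranslate

/-- **Soundness of the simultaneous unraveling `U` for WLL DCTRSs.**
For every WLL deterministic CTRS `R` over `F` and terms `s, t ∈ T(F,V)`:
if `s →*_{U(R)} t` then `s →*_R t`. -/
theorem unraveling_sound_for_WLL_DCTRSs {F V : Type} [DecidableEq V]
    (R : CTRS F V) (hD : IsDCTRS R) (hW : IsWLL R)
    (s t : Term F V)
    (h : RedStar (USys R) (liftF s) (liftF t)) :
    RedStar R s t := by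
  simpa using unraveling_sound_for_WLL_DCTRSs_general R (fun ρ hρ => (hD ρ hρ).1) hW s _ h
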